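/- Let T_2 be the tree on vertices {w, x, y, z, u₁, a₁, b₁} with edges wx, xy, yz, zu₁, u₁a₁, u₁b₁. Let Δ_S ≥ 3 be an integer, let v be any vertex of T_2, and let G be the tree on n = 7 + Δ_S vertices obtained from T_2 by adding new vertices s, l_1, …, l_{Δ_S−1} together with the edge vs and the edges s l_i (1 ≤ i ≤ Δ_S−1). If it is not the case that both v = z and Δ_S = 3 (i.e., G is not isomorphic to the tree T_3), then γ^ID(G) ≤ ((Δ−1)/Δ)·n, where Δ is the maximum degree of G. -/

import Mathlib

open SimpleGraph

/-- The closed neighborhood `N[v]` of a vertex `v` in `G`. -/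
def closedNbhd {V : Type*} (G : SimpleGraph V) (v : V) : Set V :=
  insert v (G.neighborSet v)

/-- `C` is an identifying code of `G`: it dominates every vertex and the
closed neighborhoods of distinct vertices intersect `C` differently. -/
def IsIDCode {V : Type*} (G : SimpleGraph V) (C : Set V) : Prop :=
  (∀ v, (closedNbhd G v ∩ C).Nonempty) ∧
  ∀ u w : V, u ≠ w → closedNbhd G u ∩ C ≠ closedNbhd G w ∩ C

/-- The identification number `γ^ID(G)`: the minimum size of an identifying code. -/
noncomputable def idNum {V : Type*} [Fintype V] (G : SimpleGraph V) : ℕ :=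
  sInf {k | ∃ C : Set V, C.ncard = k ∧ IsIDCode G C}

/-- `G` is identifiable (closed-twin-free). -/
def Identifiable {V : Type*} (G : SimpleGraph V) : Prop :=
  ∀ u w : V, u ≠ w → closedNbhd G u ≠ closedNbhd G w

/-- The maximum degree of a finite graph `G`. -/
noncomputable def maxDeg {V : Type*} [Fintype V] (G : SimpleGraph V) : ℕ :=
  Finset.univ.sup fun v => (G.neighborSet v).ncard

/-- `S` is a dominating set of `G`. -/
def IsDomSet {V : Type*} (G : SimpleGraph V) (S : Set V) : Prop :=
  ∀ v, (closedNbhd G v ∩ S).Nonempty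

/-- The domination number `γ(G)`. -/
noncomputable def domNum {V : Type*} [Fintype V] (G : SimpleGraph V) : ℕ :=
  sInf {k | ∃ S : Set V, S.ncard = k ∧ IsDomSet G S}

/-- The star `K_{1,k}`: vertex `0` is adjacent to each of the `k` other vertices. -/
def starGraph (k : ℕ) : SimpleGraph (Fin (k + 1)) :=
  SimpleGraph.fromRel fun a _ => a = 0

/-- The graph obtained from `G'` by appending a star with `k` extra leaves onto the
vertex `v`: we add a new universal vertex `u = Sum.inr none` adjacent to `v`,
and `k` new leaves `Sum.inr (some i)` adjacent to `u` (so the star has `k + 1`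
leaves in total, one of which is identified with `v`, i.e. a `(k+1)`-star is
appended by one of its leaves onto `v`). -/
def appendStar {V : Type*} (G' : SimpleGraph V) (v : V) (k : ℕ) :
    SimpleGraph (V ⊕ Option (Fin k)) :=
  SimpleGraph.fromRel fun a b =>
    (∃ x y, a = Sum.inl x ∧ b = Sum.inl y ∧ G'.Adj x y) ∨
    (a = Sum.inl v ∧ b = Sum.inr none) ∨
    (∃ i, a = Sum.inr none ∧ b = Sum.inr (some i))

/-- The tree `T₂`: a path `w x y z` (vertices `0 1 2 3`) with a 3-star appended by one
of its leaves onto `z = 3`; `u₁ = 4`, `a₁ = 5`, `b₁ = 6`. -/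
def T2graph : SimpleGraph (Fin 7) :=
  SimpleGraph.fromEdgeSet {s(0, 1), s(1, 2), s(2, 3), s(3, 4), s(4, 5), s(4, 6)}

/-!
The code consists of the star centre, all new leaves but one, and a set `A ∋ v` that dominates `T₂`
and separates its vertices other than `v`. The vertex `v` needs no separation inside `T₂`, being the
only old vertex adjacent to the star centre. The code leaves out `8 - |A|` of the `n` vertices, and
`γ ≤ (Δ - 1) / Δ * n` follows once `n ≤ (8 - |A|) * Δ`. Four old vertices suffice unless `v` is `z`
or `u₁`, where five are used. Then `n ≤ 3 * Δ` fails only if `Δ = Δ_S = 3`, which occurs for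
`v = z` but not for `v = u₁`, because appending the star at `u₁` gives it degree four.
-/

section General

variable {V : Type*} {G : SimpleGraph V}

theorem mem_closedNbhd {x y : V} : y ∈ closedNbhd G x ↔ y = x ∨ G.Adj x y := Iff.rfl

theorem idNum_le_ncard [Fintype V] {C : Set V} (hC : IsIDCode G C) : idNum G ≤ C.ncard :=
  Nat.sInf_le ⟨C, rfl, hC⟩

theorem ncard_neighborSet_le_maxDeg [Fintype V] (G : SimpleGraph V) (x : V) :
    (G.neighborSet x).ncard ≤ maxDeg G :=
  Finset.le_sup (f := fun x ↦ (G.neighborSet x).ncard) (Finset.mem_univ x)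

theorem ne_of_mem_closedNbhd_of_notMem {C : Set V} {p q c : V} (hc : c ∈ C)
    (hp : c ∈ closedNbhd G p) (hq : c ∉ closedNbhd G q) :
    closedNbhd G p ∩ C ≠ closedNbhd G q ∩ C :=
  fun h ↦ hq (h.subset ⟨hp, hc⟩).1

/-- The sets that dominate `G`, contain `v`, and separate any two vertices other than `v`: the
traces on `G` of the identifying codes built below, where a new neighbor of `v` in the code
distinguishes `v` from the rest of `G`. -/
structure IsIDCodeAwayFrom (G : SimpleGraph V) (v : V) (A : Set V) : Prop where
  mem : v ∈ A
  isDomSet : IsDomSet G A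
  injOn : Set.InjOn (fun x ↦ closedNbhd G x ∩ A) {v}ᶜ

theorem isIDCodeAwayFrom_coe_iff {v : V} {A : Finset V} :
    IsIDCodeAwayFrom G v A ↔
      v ∈ A ∧ (∀ x, ∃ a ∈ A, a = x ∨ G.Adj x a) ∧
        ∀ x y, x ≠ v → y ≠ v → (∀ a ∈ A, (a = x ∨ G.Adj x a) ↔ (a = y ∨ G.Adj y a)) → x = y := by
  have hdom (x : V) : (closedNbhd G x ∩ A).Nonempty ↔ ∃ a ∈ A, a = x ∨ G.Adj x a :=
    exists_congr fun _ ↦ and_comm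
  have hsep (x y : V) : closedNbhd G x ∩ A = closedNbhd G y ∩ A ↔
      ∀ a ∈ A, (a = x ∨ G.Adj x a) ↔ (a = y ∨ G.Adj y a) := by
    simp only [Set.ext_iff, Set.mem_inter_iff, mem_closedNbhd, SetLike.mem_coe,
      and_congr_left_iff]
  refine ⟨fun h ↦ ⟨h.mem, fun x ↦ (hdom x).1 (h.isDomSet x),
    fun x y hx hy hxy ↦ h.injOn hx hy ((hsep x y).2 hxy)⟩, fun ⟨hv, hd, hs⟩ ↦ ⟨hv,
    fun x ↦ (hdom x).2 (hd x), fun x hx y hy hxy ↦ hs x y hx hy ((hsep x y).1 hxy)⟩⟩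

instance [Fintype V] [DecidableEq V] [DecidableRel G.Adj] (v : V) (A : Finset V) :
    Decidable (IsIDCodeAwayFrom G v (A : Set V)) :=
  decidable_of_iff' _ isIDCodeAwayFrom_coe_iff

end General

namespace appendStar

variable {V : Type*} (G : SimpleGraph V) (v : V) (k : ℕ)

@[simp]
theorem adj_inl_inl (x y : V) : (appendStar G v k).Adj (.inl x) (.inl y) ↔ G.Adj x y := by
  simpa [appendStar, G.adj_comm y x] using G.ne_of_adj

@[simp]
theorem adj_inl_center (x : V) : (appendStar G v k).Adj (.inl x) (.inr none) ↔ x = v := by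
  simp [appendStar]

@[simp]
theorem adj_center_inl (x : V) : (appendStar G v k).Adj (.inr none) (.inl x) ↔ x = v := by
  rw [adj_comm, adj_inl_center]

@[simp]
theorem not_adj_inl_leaf (x : V) (i : Fin k) :
    ¬(appendStar G v k).Adj (.inl x) (.inr (some i)) := by
  simp [appendStar]

@[simp]
theorem not_adj_leaf_inl (i : Fin k) (x : V) :
    ¬(appendStar G v k).Adj (.inr (some i)) (.inl x) := by
  rw [adj_comm]
  exact not_adj_inl_leaf G v k x i

@[simp]
theorem adj_center_leaf (i : Fin k) : (appendStar G v k).Adj (.inr none) (.inr (some i)) := by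
  simp [appendStar]

@[simp]
theorem not_adj_leaf_leaf (i j : Fin k) :
    ¬(appendStar G v k).Adj (.inr (some i)) (.inr (some j)) := by
  simp [appendStar]

theorem neighborSet_center :
    (appendStar G v k).neighborSet (.inr none) = insert (.inl v) (Set.range (.inr ∘ some)) := by
  ext (x | _ | i) <;> simp

theorem neighborSet_inl_self :
    (appendStar G v k).neighborSet (.inl v) = insert (.inr none) (.inl '' G.neighborSet v) := by
  ext (x | _ | i) <;> simp

theorem ncard_neighborSet_center :
    ((appendStar G v k).neighborSet (.inr none)).ncard = k + 1 := by
  rw [neighborSet_center, Set.ncard_insert_of_notMem (by simp),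
    Set.ncard_range_of_injective (Sum.inr_injective.comp (Option.some_injective _)),
    Nat.card_fin]

theorem ncard_neighborSet_inl_self [Finite V] :
    ((appendStar G v k).neighborSet (.inl v)).ncard = (G.neighborSet v).ncard + 1 := by
  rw [neighborSet_inl_self, Set.ncard_insert_of_notMem (by simp),
    Set.ncard_image_of_injective _ Sum.inl_injective]

variable {G v k}

/-- The extension of a set `A` of vertices of the original graph to a set of vertices of the graph
with an appended star, by the star centre and all new leaves except the leaf `l`. -/
def extendCode (A : Set V) (l : Fin k) : Set (V ⊕ Option (Fin k)) :=
  Sum.inl '' A ∪ Sum.inr '' {some l}ᶜ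

@[simp]
theorem inl_mem_extendCode {A : Set V} {l : Fin k} {x : V} :
    .inl x ∈ extendCode A l ↔ x ∈ A := by
  simp [extendCode]

@[simp]
theorem inr_mem_extendCode {A : Set V} {l : Fin k} {o : Option (Fin k)} :
    .inr o ∈ extendCode A l ↔ o ≠ some l := by
  simp [extendCode]

theorem ncard_extendCode [Finite V] (A : Set V) (l : Fin k) :
    (extendCode A l).ncard = A.ncard + k := by
  rw [extendCode, Set.ncard_union_eq Set.disjoint_image_inl_image_inr,
    Set.ncard_image_of_injective _ Sum.inl_injective,
    Set.ncard_image_of_injective _ Sum.inr_injective, Set.ncard_compl]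
  simp

variable {A : Set V} (l : Fin k)

theorem isDomSet_extendCode (hA : IsDomSet G A) :
    IsDomSet (appendStar G v k) (extendCode A l) := by
  rintro (x | o)
  · obtain ⟨a, hxa, ha⟩ := hA x
    exact ⟨.inl a, by simpa [mem_closedNbhd] using hxa, by simpa using ha⟩
  · refine ⟨.inr none, ?_, by simp⟩
    cases o with
    | none => simp [mem_closedNbhd]
    | some i => simp [mem_closedNbhd, adj_comm]

theorem separates_inl_inl (hA : Set.InjOn (fun x ↦ closedNbhd G x ∩ A) {v}ᶜ) {x y : V}
    (hxy : x ≠ y) :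
    closedNbhd (appendStar G v k) (.inl x) ∩ extendCode A l ≠
      closedNbhd (appendStar G v k) (.inl y) ∩ extendCode A l := by
  have hv {z : V} (hz : v ≠ z) : closedNbhd (appendStar G v k) (.inl v) ∩ extendCode A l ≠
      closedNbhd (appendStar G v k) (.inl z) ∩ extendCode A l :=
    ne_of_mem_closedNbhd_of_notMem (c := .inr none) (by simp) (by simp [mem_closedNbhd])
      (by simpa [mem_closedNbhd] using hz.symm)
  by_cases hx : x = v
  · subst hx
    exact hv hxy
  by_cases hy : y = v
  · subst hy
    exact (hv hxy.symm).symm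
  have hpre (z : V) : Sum.inl ⁻¹' (closedNbhd (appendStar G v k) (.inl z) ∩ extendCode A l) =
      closedNbhd G z ∩ A := by
    ext a
    simp [mem_closedNbhd]
  intro h
  refine hxy (hA hx hy ?_)
  simpa only [hpre] using congrArg (Sum.inl ⁻¹' ·) h

theorem separates_center_inl [Nontrivial (Fin k)] (x : V) :
    closedNbhd (appendStar G v k) (.inr none) ∩ extendCode A l ≠
      closedNbhd (appendStar G v k) (.inl x) ∩ extendCode A l := by
  obtain ⟨i, hi⟩ := exists_ne l
  exact ne_of_mem_closedNbhd_of_notMem (c := .inr (some i)) (by simpa using hi)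
    (by simp [mem_closedNbhd]) (by simp [mem_closedNbhd])

theorem separates_inl_leaf (hA : IsDomSet G A) (x : V) (i : Fin k) :
    closedNbhd (appendStar G v k) (.inl x) ∩ extendCode A l ≠
      closedNbhd (appendStar G v k) (.inr (some i)) ∩ extendCode A l := by
  obtain ⟨a, hxa, ha⟩ := hA x
  exact ne_of_mem_closedNbhd_of_notMem (c := .inl a) (by simpa using ha)
    (by simpa [mem_closedNbhd] using hxa) (by simp [mem_closedNbhd])

theorem separates_center_leaf (hv : v ∈ A) (i : Fin k) :
    closedNbhd (appendStar G v k) (.inr none) ∩ extendCode A l ≠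
      closedNbhd (appendStar G v k) (.inr (some i)) ∩ extendCode A l :=
  ne_of_mem_closedNbhd_of_notMem (c := .inl v) (by simpa using hv) (by simp [mem_closedNbhd])
    (by simp [mem_closedNbhd])

theorem separates_leaf_leaf {i j : Fin k} (hij : i ≠ j) :
    closedNbhd (appendStar G v k) (.inr (some i)) ∩ extendCode A l ≠
      closedNbhd (appendStar G v k) (.inr (some j)) ∩ extendCode A l := by
  have hsep {a b : Fin k} (hab : a ≠ b) (ha : a ≠ l) :
      closedNbhd (appendStar G v k) (.inr (some a)) ∩ extendCode A l ≠
        closedNbhd (appendStar G v k) (.inr (some b)) ∩ extendCode A l :=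
    ne_of_mem_closedNbhd_of_notMem (c := .inr (some a)) (by simpa using ha)
      (by simp [mem_closedNbhd]) (by simpa [mem_closedNbhd] using hab)
  by_cases hi : i = l
  · exact (hsep hij.symm (hi ▸ hij.symm)).symm
  · exact hsep hij hi

theorem isIDCode_extendCode [Nontrivial (Fin k)] (hA : IsIDCodeAwayFrom G v A) :
    IsIDCode (appendStar G v k) (extendCode A l) := by
  refine ⟨isDomSet_extendCode l hA.isDomSet, ?_⟩
  rintro (x | _ | i) (y | _ | j) hne
  · exact separates_inl_inl l hA.injOn (by simpa using hne)
  · exact (separates_center_inl l x).symm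
  · exact separates_inl_leaf l hA.isDomSet x j
  · exact separates_center_inl l y
  · exact absurd rfl hne
  · exact separates_center_leaf l hA.mem j
  · exact (separates_inl_leaf l hA.isDomSet y i).symm
  · exact (separates_center_leaf l hA.mem i).symm
  · exact separates_leaf_leaf l (by simpa using hne)

end appendStar

theorem IsIDCodeAwayFrom.idNum_appendStar_le {V : Type*} [Fintype V] {G : SimpleGraph V} {v : V}
    {A : Set V} (hA : IsIDCodeAwayFrom G v A) {k : ℕ} (hk : 2 ≤ k) :
    idNum (appendStar G v k) ≤ A.ncard + k := by
  have : Nontrivial (Fin k) := Fin.nontrivial_iff_two_le.2 hk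
  exact (idNum_le_ncard (appendStar.isIDCode_extendCode ⟨0, by omega⟩ hA)).trans_eq
    (appendStar.ncard_extendCode A _)

theorem succ_le_maxDeg_appendStar {V : Type*} [Fintype V] (G : SimpleGraph V) (v : V) (k : ℕ) :
    k + 1 ≤ maxDeg (appendStar G v k) :=
  (appendStar.ncard_neighborSet_center G v k).ge.trans (ncard_neighborSet_le_maxDeg _ _)

theorem ncard_neighborSet_succ_le_maxDeg_appendStar {V : Type*} [Fintype V] (G : SimpleGraph V)
    (v : V) (k : ℕ) : (G.neighborSet v).ncard + 1 ≤ maxDeg (appendStar G v k) :=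
  (appendStar.ncard_neighborSet_inl_self G v k).ge.trans (ncard_neighborSet_le_maxDeg _ _)

namespace T2graph

instance : DecidableRel T2graph.Adj := fun x y ↦
  decidable_of_iff (s(x, y) ∈ ({s(0, 1), s(1, 2), s(2, 3), s(3, 4), s(4, 5), s(4, 6)} :
    Finset (Sym2 (Fin 7))) ∧ x ≠ y) (by simp [T2graph])

theorem ncard_neighborSet_four : (T2graph.neighborSet 4).ncard = 3 := by
  rw [Set.ncard_eq_toFinset_card']
  decide

/-- For each vertex `v` of `T₂`, a code of `T₂` away from `v` that is extended to an identifying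
code after a star is appended at `v`. -/
def code : Fin 7 → Finset (Fin 7) :=
  ![{0, 3, 4, 5}, {1, 3, 4, 5}, {1, 2, 5, 6}, {0, 2, 3, 4, 5}, {0, 2, 3, 4, 5}, {0, 2, 4, 5},
    {0, 2, 4, 6}]

theorem isIDCodeAwayFrom_code : ∀ v, IsIDCodeAwayFrom T2graph v (code v) := by
  decide

theorem card_code : ∀ v, (code v).card = if v = 3 ∨ v = 4 then 5 else 4 := by
  decide

theorem idNum_appendStar_le (v : Fin 7) {k : ℕ} (hk : 2 ≤ k) :
    idNum (appendStar T2graph v k) ≤ (if v = 3 ∨ v = 4 then 5 else 4) + k := by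
  rw [← card_code, ← Set.ncard_coe_finset]
  exact (isIDCodeAwayFrom_code v).idNum_appendStar_le hk

end T2graph

theorem le_sub_one_div_mul_of_add_le {K : Type*} [Field K] [LinearOrder K] [IsStrictOrderedRing K]
    {c t n Δ : K} (hΔ : 0 < Δ) (hc : c + t ≤ n) (hn : n ≤ t * Δ) : c ≤ (Δ - 1) / Δ * n := by
  calc
    c ≤ n - t := le_sub_iff_add_le.2 hc
    _ ≤ n - n / Δ := sub_le_sub_left ((div_le_iff₀ hΔ).2 hn) n
    _ = (Δ - 1) / Δ * n := by field_simp

/-- let `G` be the tree on `n = 7 + Δ_S` vertices obtained from `T₂` by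
appending a `Δ_S`-star (`Δ_S ≥ 3`) by one of its leaves onto a vertex `v` of `T₂`.
If not both `v = z` and `Δ_S = 3` (i.e. `G ≇ T₃`), then `γ^ID(G) ≤ ((Δ−1)/Δ)·n`,
where `Δ` is the maximum degree of `G`. -/
theorem stmt_11 (ΔS : ℕ) (hΔS : 3 ≤ ΔS) (v : Fin 7)
    (hne : ¬ (v = 3 ∧ ΔS = 3)) :
    (idNum (appendStar T2graph v (ΔS - 1)) : ℝ) ≤
      ((maxDeg (appendStar T2graph v (ΔS - 1)) : ℝ) - 1) /
        (maxDeg (appendStar T2graph v (ΔS - 1)) : ℝ) * ((7 : ℝ) + (ΔS : ℝ)) := by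
  have hcode := T2graph.idNum_appendStar_le v (k := ΔS - 1) (by omega)
  have hcenter := succ_le_maxDeg_appendStar T2graph v (ΔS - 1)
  have hdeg := ncard_neighborSet_succ_le_maxDeg_appendStar T2graph v (ΔS - 1)
  set Δ := maxDeg (appendStar T2graph v (ΔS - 1))
  obtain ⟨t, hct, hnt⟩ : ∃ t, idNum (appendStar T2graph v (ΔS - 1)) + t ≤ 7 + ΔS ∧
      7 + ΔS ≤ t * Δ := by
    by_cases hv : v = 3 ∨ v = 4
    · have hΔ : 4 ≤ Δ := by
        rcases hv with rfl | rfl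
        · omega
        · rwa [T2graph.ncard_neighborSet_four] at hdeg
      rw [if_pos hv] at hcode
      exact ⟨3, by omega, by omega⟩
    · rw [if_neg hv] at hcode
      exact ⟨4, by omega, by omega⟩
  have hΔ : 0 < Δ := by omega
  exact le_sub_one_div_mul_of_add_le (t := (t : ℝ)) (by exact_mod_cast hΔ)
    (by exact_mod_cast hct) (by exact_mod_cast hnt)
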